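/- Let d ≥ 2 and p > 1 − 1/d, or d = 1 and p > 1/3, and set β := 1/(2 + d(p−1)). Let μ = σ_p(r,x) dx be a Barenblatt density for some r > 0, and fix τ > 0. Then the proximal point of μ for E_p is again a Barenblatt density: μ_τ = σ_p(θ_τ(r), x) dx, where θ_τ(r) is the unique s > τβ solving r^β = s^β − τβ s^{β−1}. -/

import Mathlib

/-! The proximal problem at a Barenblatt density reduces to a linearly convex one.

Put `a := 1 - τβ/s`, so that the equation for `s` reads `r^β = a s^β` with `a ∈ (0, 1)`, and
`μ = σ_p(r)` is the image of `ν = σ_p(s)` under the dilation `y ↦ a y`. Young's inequality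
`|x - y|² ≥ (1 - 1/a)|x|² + (1 - a)|y|²`, an equality exactly for `x = a y`, gives
`W₂²(μ, ρ) ≥ (1 - 1/a) M₂(μ) + (1 - a) M₂(ρ)` for every `ρ` (`W2_lower`), with equality at `ρ = ν`
(`W2_dilate`). Since `(1 - a)/(2τ) = β/(2s)`, it suffices that `ν` is the unique minimizer of
`ρ ↦ E_p(ρ) + β/(2s) M₂(ρ)` (`barenblatt_minimizes`).

For the latter, `U_p'(σ_p(s,x)) = C - β|x|²/(2s)` on the support of `σ_p(s,·)`, and
`C - β|x|²/(2s) ≤ U_p'(0)` off the support (`sigmap_slope`). Hence the supporting-line inequality for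
the strictly convex function `U_p` (`Up_tangent_lt`) gives, for every density `f`,
`U_p(f) + β|x|²f/(2s) - C f ≥ U_p(σ_p) + β|x|²σ_p/(2s) - C σ_p` pointwise, with equality only where
`f = σ_p`. Integrating yields minimality, and uniqueness by the case of equality.

Membership of `ν` in the domain of `E_p` needs the second moment of the profile to be finite
(`integrable_sq_mul_hpProfile`), which is where the lower bound on `p` enters. -/

open MeasureTheory Filter ENNReal

noncomputable section

/-- Euclidean space `ℝ^d`. -/
abbrev Euc (d : ℕ) := EuclideanSpace ℝ (Fin d)

/-- The squared 2-Wasserstein distance, as an extended nonnegative real: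
the infimum over couplings `γ` (Borel probability measures on `ℝ^d × ℝ^d`
with first marginal `μ` and second marginal `ν`) of `∫ |x-y|² dγ`. -/
noncomputable def W2sq {d : ℕ} (μ ν : Measure (Euc d)) : ℝ≥0∞ :=
  ⨅ (γ : Measure (Euc d × Euc d)) (_ : γ.map Prod.fst = μ ∧ γ.map Prod.snd = ν),
    ∫⁻ q, ENNReal.ofReal (‖q.1 - q.2‖ ^ 2) ∂γ

/-- The 2-Wasserstein distance (a real number; degenerate when `W2sq = ∞`). -/
noncomputable def W2 {d : ℕ} (μ ν : Measure (Euc d)) : ℝ :=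
  Real.sqrt (W2sq μ ν).toReal

/-- `γ` is an optimal transport plan from `μ` to `ν`. -/
def IsOptimalPlan {d : ℕ} (μ ν : Measure (Euc d)) (γ : Measure (Euc d × Euc d)) : Prop :=
  γ.map Prod.fst = μ ∧ γ.map Prod.snd = ν ∧
    ∫⁻ q, ENNReal.ofReal (‖q.1 - q.2‖ ^ 2) ∂γ = W2sq μ ν

/-- `P₂ᵃ(ℝ^d)`: Borel probability measures with finite second moment, absolutely
continuous with respect to Lebesgue measure. -/
def P2a (d : ℕ) : Set (Measure (Euc d)) :=
  {μ | IsProbabilityMeasure μ ∧ μ ≪ volume ∧ ∫⁻ x, ENNReal.ofReal (‖x‖ ^ 2) ∂μ ≠ ⊤}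

/-- The potential energy `E(μ) = ∫ (λ/2)|x|² dμ`. -/
noncomputable def Epot {d : ℕ} (lam : ℝ) (μ : Measure (Euc d)) : ℝ :=
  ∫ x, lam / 2 * ‖x‖ ^ 2 ∂μ

/-- The second moment `∫ |x|² dμ`. -/
noncomputable def sndMom {d : ℕ} (μ : Measure (Euc d)) : ℝ := ∫ x, ‖x‖ ^ 2 ∂μ

/-- `ν` is a proximal point of `μ` for the (real-valued) functional `F`, with step `τ`,
relative to the class `S`: it minimizes `ρ ↦ W₂²(μ,ρ)/(2τ) + F(ρ)` over `S`. -/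
def IsProximalPt {d : ℕ} (S : Set (Measure (Euc d))) (F : Measure (Euc d) → ℝ) (τ : ℝ)
    (μ ν : Measure (Euc d)) : Prop :=
  ν ∈ S ∧ ∀ ρ ∈ S, (W2 μ ν) ^ 2 / (2 * τ) + F ν ≤ (W2 μ ρ) ^ 2 / (2 * τ) + F ρ

/-- `U_p(s) = (s^p - s)/(p-1)` for `p ≠ 1`, and `U_1(s) = s log s`. -/
noncomputable def Up (p s : ℝ) : ℝ :=
  if p = 1 then s * Real.log s else (s ^ p - s) / (p - 1)

/-- The (negative) Rényi entropy `E_p(ν) = ∫ U_p(f) dx` where `f` is the density of `ν`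
with respect to Lebesgue measure. -/
noncomputable def Ep {d : ℕ} (p : ℝ) (ν : Measure (Euc d)) : ℝ :=
  ∫ x, Up p ((ν.rnDeriv volume x).toReal) ∂volume

/-- The effective domain of `E_p`: absolutely continuous probability measures with
finite second moment and `E_p < ∞`. -/
def DomEp (d : ℕ) (p : ℝ) : Set (Measure (Euc d)) :=
  {ν | ν ∈ P2a d ∧ Integrable (fun x => Up p ((ν.rnDeriv volume x).toReal)) volume}

/-- The constant `C_p := (1/(1-p)) (∫ (1+|x|²)^{-p/(1-p)} dx)^{1-p}`. -/
noncomputable def Cp (d : ℕ) (p : ℝ) : ℝ :=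
  (1 / (1 - p)) * (∫ x : Euc d, (1 + ‖x‖ ^ 2) ^ (-p / (1 - p)) ∂volume) ^ (1 - p)

/-- The exponent `β = 1/(2 + d(p-1))`. -/
noncomputable def betaC (d : ℕ) (p : ℝ) : ℝ := 1 / (2 + (d : ℝ) * (p - 1))

/-- The Barenblatt profile `h_p` (with normalizing constant `lamc = λ(d,p)`). -/
noncomputable def hpProfile (d : ℕ) (p lamc : ℝ) (x : Euc d) : ℝ :=
  if p = 1 then lamc * Real.exp (-betaC d p * ‖x‖ ^ 2 / 2)
  else if p < 1 then (lamc + (1 - p) / p * (betaC d p / 2) * ‖x‖ ^ 2) ^ (1 / (p - 1))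
  else (max (lamc + (1 - p) / p * (betaC d p / 2) * ‖x‖ ^ 2) 0) ^ (1 / (p - 1))

/-- The self-similar Barenblatt profile `σ_p(t,x) = t^{-dβ} h_p(x/t^β)`. -/
noncomputable def sigmap (d : ℕ) (p lamc t : ℝ) (x : Euc d) : ℝ :=
  t ^ (-(d : ℝ) * betaC d p) * hpProfile d p lamc ((t ^ betaC d p)⁻¹ • x)

/-- The Barenblatt density `σ_p(t,x) dx` as a measure. -/
noncomputable def barenblattM (d : ℕ) (p lamc t : ℝ) : Measure (Euc d) :=
  volume.withDensity (fun x => ENNReal.ofReal (sigmap d p lamc t x))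

/-! ### Convexity of the internal energy density -/

/-- The derivative `U_p'(g)` of the internal energy density at `g > 0`. -/
def UpDeriv (p g : ℝ) : ℝ :=
  if p = 1 then Real.log g + 1 else (p * g ^ (p - 1) - 1) / (p - 1)

/-- Strict supporting-line inequality for the strictly convex function `U_p` on `[0, ∞)`.
The slope `m` has to be `U_p'(g)` when `g > 0`; at `g = 0` any `m ≤ U_p'(0) = -1/(p-1)` is
admissible, and this case only arises for `p > 1`. -/
lemma Up_tangent_lt {p g f m : ℝ} (hp : 0 < p) (hg : 0 ≤ g) (hf : 0 ≤ f) (hne : f ≠ g)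
    (hpos : 0 < g → m = UpDeriv p g) (hzero : g = 0 → 1 < p ∧ m ≤ -(1 / (p - 1))) :
    Up p g + m * (f - g) < Up p f := by
  rcases hg.eq_or_lt with h0 | h0
  · obtain ⟨h1, hm⟩ := hzero h0.symm
    subst h0
    have hf' : 0 < f := lt_of_le_of_ne hf (Ne.symm hne)
    have hp1 : p ≠ 1 := h1.ne'
    have hpm : 0 < p - 1 := by linarith
    simp only [Up, hp1, if_false, Real.zero_rpow hp.ne', sub_zero, zero_div, zero_add]
    have h2 : 0 < f ^ p := Real.rpow_pos_of_pos hf' p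
    have h3 : m * f ≤ -(1 / (p - 1)) * f := mul_le_mul_of_nonneg_right hm hf
    have h4 : (f ^ p - f) / (p - 1) = f ^ p / (p - 1) + -(1 / (p - 1)) * f := by
      field_simp; ring
    have h5 : 0 < f ^ p / (p - 1) := by positivity
    linarith
  · have hm := hpos h0
    subst hm
    by_cases hp1 : p = 1
    · simp only [Up, UpDeriv, hp1, if_true]
      rcases hf.eq_or_lt with hf0 | hf0
      · subst hf0; simp; nlinarith
      · have hr : g / f ≠ 1 := fun h => hne ((div_eq_one_iff_eq hf0.ne').1 h).symm
        have h1 := Real.log_lt_sub_one_of_pos (div_pos h0 hf0) hr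
        rw [Real.log_div h0.ne' hf0.ne'] at h1
        have h2 := mul_lt_mul_of_pos_left h1 hf0
        have h3 : f * (g / f - 1) = g - f := by field_simp
        rw [h3] at h2
        linarith
    · simp only [Up, UpDeriv, hp1, if_false]
      have hs1 : -1 ≤ f / g - 1 := by
        have : 0 ≤ f / g := by positivity
        linarith
      have hs0 : f / g - 1 ≠ 0 := fun h => hne ((div_eq_one_iff_eq h0.ne').1 (by linarith))
      have hfp : (1 + (f / g - 1)) ^ p = f ^ p / g ^ p := by
        rw [add_sub_cancel, Real.div_rpow hf hg]
      have hgp : 0 < g ^ p := Real.rpow_pos_of_pos h0 p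
      have hgm : g ^ (p - 1) = g ^ p / g := by rw [Real.rpow_sub h0, Real.rpow_one]
      have key : (f ^ p - f) / (p - 1)
          - ((g ^ p - g) / (p - 1) + (p * g ^ (p - 1) - 1) / (p - 1) * (f - g))
          = g ^ p * ((f ^ p / g ^ p - (1 + p * (f / g - 1))) / (p - 1)) := by
        have : p - 1 ≠ 0 := sub_ne_zero.2 hp1
        rw [hgm]; field_simp; ring
      have hq : 0 < (f ^ p / g ^ p - (1 + p * (f / g - 1))) / (p - 1) := by
        rcases lt_or_gt_of_ne hp1 with h | h
        · have := rpow_one_add_lt_one_add_mul_self hs1 hs0 hp h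
          rw [hfp] at this
          exact div_pos_of_neg_of_neg (by linarith) (by linarith)
        · have := one_add_mul_self_lt_rpow_one_add hs1 hs0 h
          rw [hfp] at this
          exact div_pos (by linarith) (by linarith)
      have := mul_pos hgp hq
      linarith

lemma Up_tangent_le {p g f m : ℝ} (hp : 0 < p) (hg : 0 ≤ g) (hf : 0 ≤ f)
    (hpos : 0 < g → m = UpDeriv p g) (hzero : g = 0 → 1 < p ∧ m ≤ -(1 / (p - 1))) :
    Up p g + m * (f - g) ≤ Up p f := by
  by_cases h : f = g
  · subst h; simp
  · exact (Up_tangent_lt hp hg hf h hpos hzero).le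

/-- `U_p(g)` is `g` times an affine function of the slope `U_p'(g)`. Along a Barenblatt profile
the slope is a quadratic polynomial in `|x|`, so the integrability of `U_p(σ_p)` reduces to the
finiteness of the second moment. -/
lemma Up_eq_of_slope {p g m : ℝ} (hp : 0 < p) (hg : 0 ≤ g)
    (hpos : 0 < g → m = UpDeriv p g) : Up p g = (m - 1) / p * g := by
  rcases hg.eq_or_lt with h0 | h0
  · subst h0; simp [Up, Real.zero_rpow hp.ne']
  · rw [hpos h0]
    by_cases hp1 : p = 1
    · simp [Up, UpDeriv, hp1, mul_comm]
    · have : p - 1 ≠ 0 := sub_ne_zero.2 hp1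
      simp only [Up, UpDeriv, hp1, if_false]
      rw [Real.rpow_sub h0, Real.rpow_one]; field_simp; ring

/-! ### The Barenblatt profile -/

lemma p_pos_of {d : ℕ} {p : ℝ} (hdp : (2 ≤ d ∧ 1 - 1 / (d : ℝ) < p) ∨ (d = 1 ∧ 1/3 < p)) :
    0 < p := by
  rcases hdp with ⟨h, h'⟩ | ⟨h, h'⟩
  · have h2 : (2 : ℝ) ≤ d := by exact_mod_cast h
    have : 1 / (d : ℝ) ≤ 1 := by rw [div_le_one (by linarith)]; linarith
    linarith
  · linarith

lemma beta_denom_pos {d : ℕ} {p : ℝ}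
    (hdp : (2 ≤ d ∧ 1 - 1 / (d : ℝ) < p) ∨ (d = 1 ∧ 1/3 < p)) :
    0 < 2 + (d : ℝ) * (p - 1) := by
  rcases hdp with ⟨h, h'⟩ | ⟨h, h'⟩
  · have h2 : (2 : ℝ) ≤ d := by exact_mod_cast h
    have h3 : (d : ℝ) * (1 / d) = 1 := by field_simp
    nlinarith
  · subst h; norm_num; linarith

/-- The admissible range of `p` lies in `p > d/(d+2)`, the range in which the profile has a
finite second moment. -/
lemma moment_exponent {d : ℕ} {p : ℝ}
    (hdp : (2 ≤ d ∧ 1 - 1 / (d : ℝ) < p) ∨ (d = 1 ∧ 1/3 < p)) :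
    (d : ℝ) * (1 - p) < 2 * p := by
  rcases hdp with ⟨h, h'⟩ | ⟨h, h'⟩
  · have h2 : (2 : ℝ) ≤ d := by exact_mod_cast h
    have h3 : (d : ℝ) * (1 / d) = 1 := by field_simp
    have h4 : 1 / (d : ℝ) ≤ 1 / 2 := one_div_le_one_div_of_le (by norm_num) h2
    nlinarith
  · subst h; norm_num; linarith

lemma betaC_pos {d : ℕ} {p : ℝ}
    (hdp : (2 ≤ d ∧ 1 - 1 / (d : ℝ) < p) ∨ (d = 1 ∧ 1/3 < p)) : 0 < betaC d p :=
  one_div_pos.2 (beta_denom_pos hdp)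

lemma hpProfile_nonneg {d : ℕ} {p lamc : ℝ} (hp : 0 < p) (hlamc : 0 < lamc)
    (hβ : 0 < betaC d p) (x : Euc d) : 0 ≤ hpProfile d p lamc x := by
  unfold hpProfile
  split_ifs with h1 h2
  · positivity
  · have : 0 < 1 - p := by linarith
    positivity
  · positivity

lemma measurable_hpProfile (d : ℕ) (p lamc : ℝ) : Measurable (hpProfile d p lamc) := by
  unfold hpProfile
  split_ifs <;> fun_prop

lemma sigmap_nonneg {d : ℕ} {p lamc t : ℝ} (hp : 0 < p) (hlamc : 0 < lamc)
    (hβ : 0 < betaC d p) (ht : 0 < t) (x : Euc d) : 0 ≤ sigmap d p lamc t x :=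
  mul_nonneg (by positivity) (hpProfile_nonneg hp hlamc hβ _)

lemma measurable_sigmap (d : ℕ) (p lamc t : ℝ) : Measurable (sigmap d p lamc t) := by
  unfold sigmap
  exact ((measurable_hpProfile d p lamc).comp (measurable_const_smul _)).const_mul _

/-- First-order optimality of a Barenblatt density: on its support
`U_p'(σ_p(t,x)) = C - β|x|²/(2t)`, and outside the support (only for `p > 1`) the right-hand side
is at most `U_p'(0) = -1/(p-1)`. -/
lemma sigmap_slope {d : ℕ} {p lamc t : ℝ} (hp : 0 < p) (hlamc : 0 < lamc)
    (hden : 0 < 2 + (d : ℝ) * (p - 1)) (ht : 0 < t) :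
    ∃ C : ℝ, ∀ x : Euc d,
      (0 < sigmap d p lamc t x →
        C - betaC d p / (2 * t) * ‖x‖ ^ 2 = UpDeriv p (sigmap d p lamc t x)) ∧
      (sigmap d p lamc t x = 0 →
        1 < p ∧ C - betaC d p / (2 * t) * ‖x‖ ^ 2 ≤ -(1 / (p - 1))) := by
  have hβ : 0 < betaC d p := one_div_pos.2 hden
  have hnorm : ∀ x : Euc d,
      ‖(t ^ betaC d p)⁻¹ • x‖ ^ 2 = (t ^ betaC d p)⁻¹ ^ 2 * ‖x‖ ^ 2 := fun x => by
    rw [norm_smul, mul_pow, Real.norm_eq_abs, sq_abs]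
  by_cases hp1 : p = 1
  · subst hp1
    have hb : betaC d 1 = 1 / 2 := by simp [betaC]
    have htt : (t ^ betaC d 1)⁻¹ ^ 2 = t⁻¹ := by
      rw [hb, ← Real.sqrt_eq_rpow, inv_pow, Real.sq_sqrt ht.le]
    refine ⟨Real.log (t ^ (-(d : ℝ) * betaC d 1)) + Real.log lamc + 1, fun x => ⟨fun _ => ?_, ?_⟩⟩
    · simp only [UpDeriv, sigmap, hpProfile, if_true]
      rw [Real.log_mul (by positivity) (by positivity), Real.log_mul (by positivity)
        (by positivity), Real.log_exp, hnorm, htt]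
      field_simp; ring
    · intro h
      have : 0 < sigmap d 1 lamc t x := by
        simp only [sigmap, hpProfile, if_true]; positivity
      exact absurd h this.ne'
  · have hpm : p - 1 ≠ 0 := sub_ne_zero.2 hp1
    set T : ℝ := t ^ (-(d : ℝ) * betaC d p * (p - 1)) with hT
    have hT0 : 0 < T := by positivity
    -- the exponents add up to `-β(2 + d(p-1)) = -1`
    have hTt : T * (t ^ betaC d p)⁻¹ ^ 2 = t⁻¹ := by
      rw [hT, ← Real.rpow_neg ht.le, ← Real.rpow_natCast, ← Real.rpow_mul ht.le,
        ← Real.rpow_add ht, ← Real.rpow_neg_one]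
      congr 1
      simp only [betaC]; push_cast; field_simp; ring
    set B : Euc d → ℝ := fun x =>
      lamc + (1 - p) / p * (betaC d p / 2) * ‖(t ^ betaC d p)⁻¹ • x‖ ^ 2 with hB
    have hCB : ∀ x, (p * T * lamc - 1) / (p - 1) - betaC d p / (2 * t) * ‖x‖ ^ 2
        = (p * (T * B x) - 1) / (p - 1) := fun x => by
      have h1 : T * B x = T * lamc + (1 - p) / p * (betaC d p / 2) * (t⁻¹ * ‖x‖ ^ 2) := by
        rw [← hTt]; simp only [hB]; rw [hnorm]; ring
      rw [h1]; field_simp; ring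
    have hpow : ∀ x, 0 < B x →
        (t ^ (-(d : ℝ) * betaC d p) * B x ^ (1 / (p - 1))) ^ (p - 1) = T * B x := fun x hx => by
      rw [Real.mul_rpow (by positivity) (by positivity), ← Real.rpow_mul ht.le,
        ← Real.rpow_mul hx.le, one_div_mul_cancel hpm, Real.rpow_one]
    have hσ : ∀ x, 0 < B x →
        sigmap d p lamc t x = t ^ (-(d : ℝ) * betaC d p) * B x ^ (1 / (p - 1)) := fun x hx => by
      simp only [sigmap, hpProfile, hp1, if_false]
      split_ifs
      · rfl
      · rw [max_eq_left hx.le]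
    refine ⟨(p * T * lamc - 1) / (p - 1), fun x => ?_⟩
    rw [hCB x]
    rcases lt_or_ge 0 (B x) with hx | hx
    · refine ⟨fun _ => ?_, fun h => ?_⟩
      · simp only [UpDeriv, hp1, if_false]
        rw [hσ x hx, hpow x hx]
      · rw [hσ x hx] at h
        have : 0 < t ^ (-(d : ℝ) * betaC d p) * B x ^ (1 / (p - 1)) := by positivity
        exact absurd h this.ne'
    · have hp2 : 1 < p := by
        by_contra hcon
        have : 0 < 1 - p := by
          rcases lt_or_gt_of_ne hp1 with h | h <;> linarith
        have : 0 < B x := by simp only [hB]; positivity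
        linarith
      have hpp : 0 < p - 1 := by linarith
      have h0 : sigmap d p lamc t x = 0 := by
        simp only [sigmap, hpProfile, hp1, if_false, not_lt.2 hp2.le]
        rw [max_eq_right hx, Real.zero_rpow (by positivity), mul_zero]
      refine ⟨fun h => absurd h0 h.ne', fun _ => ⟨hp2, ?_⟩⟩
      rw [sub_div]
      have : p * (T * B x) / (p - 1) ≤ 0 :=
        div_nonpos_of_nonpos_of_nonneg
          (mul_nonpos_of_nonneg_of_nonpos hp.le (mul_nonpos_of_nonneg_of_nonpos hT0.le hx)) hpp.le
      linarith

/-- Finiteness of the second moment of the profile: polynomial decay for `p < 1`, Gaussian decay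
for `p = 1`, bounded support for `p > 1`. -/
lemma integrable_sq_mul_hpProfile {d : ℕ} {p lamc : ℝ}
    (hdp : (2 ≤ d ∧ 1 - 1 / (d : ℝ) < p) ∨ (d = 1 ∧ 1/3 < p)) (hlamc : 0 < lamc)
    (hint : Integrable (hpProfile d p lamc)) :
    Integrable (fun x : Euc d => ‖x‖ ^ 2 * hpProfile d p lamc x) := by
  have hp := p_pos_of hdp
  have hβ := betaC_pos hdp
  have hmeas : AEStronglyMeasurable (fun x : Euc d => ‖x‖ ^ 2 * hpProfile d p lamc x) volume := by
    have := measurable_hpProfile d p lamc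
    exact Measurable.aestronglyMeasurable (by fun_prop)
  have hnn : ∀ x : Euc d, ‖‖x‖ ^ 2 * hpProfile d p lamc x‖ = ‖x‖ ^ 2 * hpProfile d p lamc x :=
    fun x => Real.norm_of_nonneg (mul_nonneg (by positivity) (hpProfile_nonneg hp hlamc hβ x))
  rcases lt_trichotomy p 1 with h | h | h
  · have h1p : 0 < 1 - p := by linarith
    set c : ℝ := (1 - p) / p * (betaC d p / 2) with hc
    have hc0 : 0 < c := by positivity
    set m : ℝ := min lamc c with hm
    have hm0 : 0 < m := lt_min hlamc hc0
    have hdim : ((Module.finrank ℝ (Euc d) : ℕ) : ℝ) < 2 * p / (1 - p) := by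
      rw [finrank_euclideanSpace_fin, lt_div_iff₀ h1p]; exact moment_exponent hdp
    refine ((integrable_rpow_neg_one_add_norm_sq (μ := (volume : Measure (Euc d)))
      hdim).const_mul (m ^ (1 / (p - 1)))).mono' hmeas (Eventually.of_forall fun x => ?_)
    rw [hnn]
    simp only [hpProfile, h.ne, h, if_true, if_false]
    rw [← hc]
    have hu : 0 < 1 + ‖x‖ ^ 2 := by positivity
    have hle : m * (1 + ‖x‖ ^ 2) ≤ lamc + c * ‖x‖ ^ 2 := by
      have h1 : m ≤ lamc := min_le_left _ _
      have h2 : m ≤ c := min_le_right _ _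
      nlinarith [sq_nonneg ‖x‖]
    have hexp : 1 / (p - 1) ≤ 0 := one_div_nonpos.2 (by linarith)
    have h3 : (lamc + c * ‖x‖ ^ 2) ^ (1 / (p - 1)) ≤ (m * (1 + ‖x‖ ^ 2)) ^ (1 / (p - 1)) :=
      Real.rpow_le_rpow_of_nonpos (by positivity) hle hexp
    rw [Real.mul_rpow hm0.le hu.le] at h3
    have hpm : p - 1 ≠ 0 := by linarith
    have h4 : (1 + ‖x‖ ^ 2) ^ (-(2 * p / (1 - p)) / 2)
        = (1 + ‖x‖ ^ 2) * (1 + ‖x‖ ^ 2) ^ (1 / (p - 1)) := by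
      rw [← Real.rpow_one_add' hu.le]
      · congr 1
        have : 1 - p ≠ 0 := h1p.ne'
        field_simp; ring
      · have : 1 + 1 / (p - 1) = p / (p - 1) := by field_simp; ring
        rw [this]; exact div_ne_zero hp.ne' hpm
    rw [h4]
    calc ‖x‖ ^ 2 * (lamc + c * ‖x‖ ^ 2) ^ (1 / (p - 1))
        ≤ (1 + ‖x‖ ^ 2) * (m ^ (1 / (p - 1)) * (1 + ‖x‖ ^ 2) ^ (1 / (p - 1))) :=
          mul_le_mul (by linarith) h3 (by positivity) hu.le
      _ = _ := by ring
  · subst h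
    have hb : betaC d 1 = 1 / 2 := by simp [betaC]
    have hg : Integrable (fun x : Euc d => Real.exp (-(1 / 8) * ‖x‖ ^ 2)) := by
      have := GaussianFourier.integrable_cexp_neg_mul_sq_norm_add (V := Euc d)
        (b := ((1 / 8 : ℝ) : ℂ)) (by rw [Complex.ofReal_re]; norm_num) 0 0
      have h2 := this.re
      refine h2.congr (Eventually.of_forall fun x => ?_)
      have : (-((1 / 8 : ℝ) : ℂ) * ((‖x‖ : ℝ) : ℂ) ^ 2 + 0 * ((inner ℝ (0 : Euc d) x : ℝ) : ℂ))
          = ((-(1 / 8) * ‖x‖ ^ 2 : ℝ) : ℂ) := by push_cast; ring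
      simp only [this]
      rw [← Complex.ofReal_exp]; rfl
    refine (hg.const_mul (8 * lamc)).mono' hmeas (Eventually.of_forall fun x => ?_)
    rw [hnn]
    simp only [hpProfile, if_true, hb]
    have h1 : ‖x‖ ^ 2 ≤ 8 * Real.exp (‖x‖ ^ 2 / 8) := by
      have := Real.add_one_le_exp (‖x‖ ^ 2 / 8)
      linarith
    have h2 : Real.exp (-(1 / 8) * ‖x‖ ^ 2)
        = Real.exp (‖x‖ ^ 2 / 8) * Real.exp (-(1 / 2) * ‖x‖ ^ 2 / 2) := by
      rw [← Real.exp_add]; congr 1; ring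
    rw [h2]
    calc _ ≤ (8 * Real.exp (‖x‖ ^ 2 / 8)) * (lamc * Real.exp (-(1 / 2) * ‖x‖ ^ 2 / 2)) :=
          mul_le_mul_of_nonneg_right h1 (by positivity)
      _ = _ := by ring
  · have hp1 : 0 < p - 1 := by linarith
    set c : ℝ := (p - 1) / p * (betaC d p / 2) with hc
    have hc0 : 0 < c := by positivity
    refine (hint.const_mul (lamc / c)).mono' hmeas (Eventually.of_forall fun x => ?_)
    rw [hnn]
    by_cases hx : ‖x‖ ^ 2 ≤ lamc / c
    · exact mul_le_mul_of_nonneg_right hx (hpProfile_nonneg hp hlamc hβ x)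
    · have h1 : lamc < c * ‖x‖ ^ 2 := by
        rw [not_le, div_lt_iff₀ hc0] at hx; linarith
      have h2 : lamc + (1 - p) / p * (betaC d p / 2) * ‖x‖ ^ 2 ≤ 0 := by
        have : (1 - p) / p * (betaC d p / 2) = -c := by rw [hc]; ring
        rw [this]; linarith
      have : hpProfile d p lamc x = 0 := by
        simp only [hpProfile, h.ne', not_lt.2 h.le, if_false]
        rw [max_eq_right h2, Real.zero_rpow (by positivity)]
      rw [this]; simp

/-! ### Dilations -/

/-- Change of variables for a density under a dilation. -/
lemma map_smul_withDensity {d : ℕ} {a : ℝ} (ha : 0 < a) {g : Euc d → ℝ≥0∞}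
    (hg : Measurable g) :
    (volume.withDensity g).map (fun x => a • x)
      = volume.withDensity (fun x => ENNReal.ofReal ((a ^ d)⁻¹) * g (a⁻¹ • x)) := by
  have hm : Measurable (fun x : Euc d => a • x) := measurable_const_smul a
  have hG : Measurable (fun x : Euc d => g (a⁻¹ • x)) := hg.comp (measurable_const_smul _)
  have hvol : (volume : Measure (Euc d)).map (fun x => a • x)
      = ENNReal.ofReal ((a ^ d)⁻¹) • volume := by
    rw [Measure.map_addHaar_smul _ ha.ne', finrank_euclideanSpace_fin,
      abs_of_pos (by positivity)]
  ext A hA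
  rw [Measure.map_apply hm hA, withDensity_apply _ (hm hA), withDensity_apply _ hA,
    lintegral_const_mul _ hG, ← smul_eq_mul, ← lintegral_smul_measure, ← Measure.restrict_smul,
    ← hvol, setLIntegral_map hA hG hm]
  simp [smul_smul, inv_mul_cancel₀ ha.ne']

/-- The Barenblatt densities are the dilates of a single measure. -/
lemma barenblattM_eq_map {d : ℕ} (p lamc : ℝ) {t : ℝ} (ht : 0 < t) :
    barenblattM d p lamc t
      = (volume.withDensity (fun x => ENNReal.ofReal (hpProfile d p lamc x))).map
          (fun x => t ^ betaC d p • x) := by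
  have h0 : 0 < t ^ betaC d p := by positivity
  rw [map_smul_withDensity h0 (measurable_hpProfile d p lamc).ennreal_ofReal, barenblattM]
  congr 1
  ext x
  rw [← ENNReal.ofReal_mul (by positivity), sigmap]
  congr 2
  rw [← Real.rpow_natCast, ← Real.rpow_mul ht.le, ← Real.rpow_neg ht.le]
  congr 1; ring

lemma barenblattM_dilate {d : ℕ} (p lamc : ℝ) {r s a : ℝ} (hr : 0 < r) (hs : 0 < s)
    (ha : r ^ betaC d p = a * s ^ betaC d p) :
    barenblattM d p lamc r = (barenblattM d p lamc s).map (fun x => a • x) := by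
  rw [barenblattM_eq_map p lamc hr, barenblattM_eq_map p lamc hs,
    Measure.map_map (measurable_const_smul _) (measurable_const_smul _)]
  congr 1
  ext1 x
  simp [smul_smul, ha]

lemma integrable_sq_of_mem {d : ℕ} {ρ : Measure (Euc d)} (h : ρ ∈ P2a d) :
    Integrable (fun x => ‖x‖ ^ 2) ρ :=
  ⟨by fun_prop, (hasFiniteIntegral_iff_ofReal (Eventually.of_forall fun x => sq_nonneg _)).2
    h.2.2.lt_top⟩

lemma barenblattM_mem_P2a {d : ℕ} {p lamc t : ℝ}
    (hdp : (2 ≤ d ∧ 1 - 1 / (d : ℝ) < p) ∨ (d = 1 ∧ 1/3 < p)) (hlamc : 0 < lamc)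
    (hnorm : ∫ x : Euc d, hpProfile d p lamc x ∂volume = 1) (ht : 0 < t) :
    barenblattM d p lamc t ∈ P2a d := by
  have hp := p_pos_of hdp
  have hβ := betaC_pos hdp
  have hint := integrable_of_integral_eq_one hnorm
  have hmeas := (measurable_hpProfile d p lamc).ennreal_ofReal
  set ν₀ := (volume : Measure (Euc d)).withDensity
    (fun x => ENNReal.ofReal (hpProfile d p lamc x)) with hν₀
  have hprob : IsProbabilityMeasure ν₀ := ⟨by
    rw [hν₀, withDensity_apply _ MeasurableSet.univ, Measure.restrict_univ,
      ← ofReal_integral_eq_lintegral_ofReal hint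
        (Eventually.of_forall fun x => hpProfile_nonneg hp hlamc hβ x), hnorm, ENNReal.ofReal_one]⟩
  have hsm : Measurable (fun x : Euc d => t ^ betaC d p • x) := measurable_const_smul _
  refine ⟨?_, withDensity_absolutelyContinuous _ _, ?_⟩
  · rw [barenblattM_eq_map p lamc ht]
    exact Measure.isProbabilityMeasure_map hsm.aemeasurable
  · have h2 : Integrable (fun x => ‖x‖ ^ 2) ν₀ := by
      rw [hν₀, integrable_withDensity_iff_integrable_smul' hmeas (by simp)]
      refine (integrable_sq_mul_hpProfile hdp hlamc hint).congr (Eventually.of_forall fun x => ?_)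
      simp only [smul_eq_mul]
      rw [ENNReal.toReal_ofReal (hpProfile_nonneg hp hlamc hβ x), mul_comm]
    have h3 : Integrable (fun x => ‖x‖ ^ 2) (barenblattM d p lamc t) := by
      rw [barenblattM_eq_map p lamc ht, integrable_map_measure (by fun_prop) hsm.aemeasurable]
      refine (h2.const_mul ((t ^ betaC d p) ^ 2)).congr (Eventually.of_forall fun x => ?_)
      simp [norm_smul, mul_pow]
    exact ((hasFiniteIntegral_iff_ofReal (Eventually.of_forall fun x => sq_nonneg _)).1 h3.2).ne

/-! ### Wasserstein bounds -/

/-- Weak Kantorovich duality with quadratic potentials: Young's inequality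
`2⟨x, y⟩ ≤ |x|²/a + a|y|²` bounds the cost of every coupling from below in terms of the second
moments of its marginals. -/
lemma W2sq_lower {d : ℕ} {μ ρ : Measure (Euc d)} (hμ : μ ∈ P2a d) (hρ : ρ ∈ P2a d) {a : ℝ}
    (ha : 0 < a) :
    ENNReal.ofReal ((1 - 1 / a) * sndMom μ + (1 - a) * sndMom ρ) ≤ W2sq μ ρ := by
  refine le_iInf₂ fun γ hγ => ?_
  obtain ⟨rfl, rfl⟩ := hγ
  have h1 : Integrable (fun q : Euc d × Euc d => ‖q.1‖ ^ 2) γ :=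
    (integrable_map_measure (by fun_prop) measurable_fst.aemeasurable).1 (integrable_sq_of_mem hμ)
  have h2 : Integrable (fun q : Euc d × Euc d => ‖q.2‖ ^ 2) γ :=
    (integrable_map_measure (by fun_prop) measurable_snd.aemeasurable).1 (integrable_sq_of_mem hρ)
  have hsub : ∀ q : Euc d × Euc d,
      ‖q.1 - q.2‖ ^ 2 = ‖q.1‖ ^ 2 - 2 * inner ℝ q.1 q.2 + ‖q.2‖ ^ 2 :=
    fun q => norm_sub_sq_real _ _
  have hcs : ∀ q : Euc d × Euc d, |inner ℝ q.1 q.2| ≤ ‖q.1‖ * ‖q.2‖ :=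
    fun q => abs_real_inner_le_norm _ _
  have h3 : Integrable (fun q : Euc d × Euc d => ‖q.1 - q.2‖ ^ 2) γ := by
    refine ((h1.add h2).const_mul 2).mono' (by fun_prop) (Eventually.of_forall fun q => ?_)
    rw [Real.norm_of_nonneg (sq_nonneg _), hsub, Pi.add_apply]
    nlinarith [(abs_le.1 (hcs q)).1, sq_nonneg (‖q.1‖ - ‖q.2‖)]
  rw [← ofReal_integral_eq_lintegral_ofReal h3 (Eventually.of_forall fun q => sq_nonneg _)]
  refine ENNReal.ofReal_le_ofReal ?_
  have e1 : sndMom (γ.map Prod.fst) = ∫ q, ‖q.1‖ ^ 2 ∂γ :=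
    integral_map measurable_fst.aemeasurable (by fun_prop)
  have e2 : sndMom (γ.map Prod.snd) = ∫ q, ‖q.2‖ ^ 2 ∂γ :=
    integral_map measurable_snd.aemeasurable (by fun_prop)
  rw [e1, e2, ← integral_const_mul, ← integral_const_mul,
    ← integral_add (h1.const_mul _) (h2.const_mul _)]
  refine integral_mono ((h1.const_mul _).add (h2.const_mul _)) h3 fun q => ?_
  simp only [hsub]
  have hy : 2 * (‖q.1‖ * ‖q.2‖) ≤ 1 / a * ‖q.1‖ ^ 2 + a * ‖q.2‖ ^ 2 := by
    have h5 : 1 / a * ‖q.1‖ ^ 2 + a * ‖q.2‖ ^ 2 - 2 * (‖q.1‖ * ‖q.2‖)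
        = (‖q.1‖ - a * ‖q.2‖) ^ 2 / a := by field_simp; ring
    have : 0 ≤ (‖q.1‖ - a * ‖q.2‖) ^ 2 / a := by positivity
    linarith
  have := (abs_le.1 (hcs q)).2
  linarith

/-- The product coupling has finite cost. -/
lemma W2sq_ne_top {d : ℕ} {μ ρ : Measure (Euc d)} (hμ : μ ∈ P2a d) (hρ : ρ ∈ P2a d) :
    W2sq μ ρ ≠ ⊤ := by
  have := hμ.1
  have := hρ.1
  have h1 : Integrable (fun q : Euc d × Euc d => ‖q.1‖ ^ 2) (μ.prod ρ) :=
    (integrable_sq_of_mem hμ).comp_fst ρ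
  have h2 : Integrable (fun q : Euc d × Euc d => ‖q.2‖ ^ 2) (μ.prod ρ) :=
    (integrable_sq_of_mem hρ).comp_snd μ
  have h3 : Integrable (fun q : Euc d × Euc d => ‖q.1 - q.2‖ ^ 2) (μ.prod ρ) := by
    refine ((h1.add h2).const_mul 2).mono' (by fun_prop) (Eventually.of_forall fun q => ?_)
    rw [Real.norm_of_nonneg (sq_nonneg _), Pi.add_apply]
    nlinarith [norm_sub_le q.1 q.2, norm_nonneg (q.1 - q.2), sq_nonneg (‖q.1‖ - ‖q.2‖)]
  refine ne_top_of_le_ne_top ?_ (iInf₂_le (μ.prod ρ) ⟨by simp, by simp⟩)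
  exact ((hasFiniteIntegral_iff_ofReal (Eventually.of_forall fun q => sq_nonneg _)).1 h3.2).ne

lemma W2_sq {d : ℕ} (μ ρ : Measure (Euc d)) : W2 μ ρ ^ 2 = (W2sq μ ρ).toReal :=
  Real.sq_sqrt ENNReal.toReal_nonneg

lemma W2_lower {d : ℕ} {μ ρ : Measure (Euc d)} (hμ : μ ∈ P2a d) (hρ : ρ ∈ P2a d) {a : ℝ}
    (ha : 0 < a) :
    (1 - 1 / a) * sndMom μ + (1 - a) * sndMom ρ ≤ W2 μ ρ ^ 2 := by
  rw [W2_sq]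
  exact (ENNReal.ofReal_le_iff_le_toReal (W2sq_ne_top hμ hρ)).1 (W2sq_lower hμ hρ ha)

/-- The coupling induced by the dilation `y ↦ a y` bounds the distance from above. -/
lemma W2_dilate {d : ℕ} {ν : Measure (Euc d)} (hν : ν ∈ P2a d) (a : ℝ) :
    W2 (ν.map (fun x => a • x)) ν ^ 2 ≤ (1 - a) ^ 2 * sndMom ν := by
  have hm : Measurable (fun y : Euc d => (a • y, y)) := by fun_prop
  have hM : 0 ≤ sndMom ν := integral_nonneg fun x => sq_nonneg _
  rw [W2_sq]
  refine ENNReal.toReal_le_of_le_ofReal (by positivity) ?_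
  have hγ : (ν.map (fun y : Euc d => (a • y, y))).map Prod.fst = ν.map (fun x => a • x) ∧
      (ν.map (fun y : Euc d => (a • y, y))).map Prod.snd = ν := ⟨?_, ?_⟩
  · refine (iInf₂_le (ν.map (fun y : Euc d => (a • y, y))) hγ).trans ?_
    rw [lintegral_map (by fun_prop) hm, sndMom, ← integral_const_mul,
      ofReal_integral_eq_lintegral_ofReal ((integrable_sq_of_mem hν).const_mul _)
        (Eventually.of_forall fun x => by positivity)]
    refine lintegral_mono fun y => ENNReal.ofReal_le_ofReal (le_of_eq ?_)
    have : a • y - y = (a - 1) • y := by rw [sub_smul, one_smul]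
    simp only [this]
    rw [norm_smul, mul_pow, Real.norm_eq_abs, sq_abs]; ring
  · rw [Measure.map_map measurable_fst hm]; rfl
  · rw [Measure.map_map measurable_snd hm]; exact Measure.map_id

lemma sndMom_dilate {d : ℕ} (ν : Measure (Euc d)) (a : ℝ) :
    sndMom (ν.map (fun x => a • x)) = a ^ 2 * sndMom ν := by
  rw [sndMom, integral_map (measurable_const_smul a).aemeasurable (by fun_prop), sndMom,
    ← integral_const_mul]
  refine integral_congr_ae (Eventually.of_forall fun y => ?_)
  simp [norm_smul, mul_pow]

/-! ### Minimality for the confined entropy -/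

/-- Integrals of the Lebesgue density of an element of `P₂ᵃ`. -/
lemma density_facts {d : ℕ} {ρ : Measure (Euc d)} (h : ρ ∈ P2a d) :
    Integrable (fun x => (ρ.rnDeriv volume x).toReal) ∧
    ∫ x, (ρ.rnDeriv volume x).toReal = 1 ∧
    Integrable (fun x => (ρ.rnDeriv volume x).toReal * ‖x‖ ^ 2) ∧
    ∫ x, (ρ.rnDeriv volume x).toReal * ‖x‖ ^ 2 = sndMom ρ := by
  have := h.1
  refine ⟨Measure.integrable_toReal_rnDeriv, ?_, ?_, ?_⟩
  · rw [Measure.integral_toReal_rnDeriv h.2.1]; simp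
  · exact (integrable_rnDeriv_smul_iff h.2.1).2 (integrable_sq_of_mem h)
  · exact integral_rnDeriv_smul h.2.1

lemma eq_of_density_ae_eq {d : ℕ} {ρ ν : Measure (Euc d)} (hρ : ρ ∈ P2a d) (hν : ν ∈ P2a d)
    (h : (fun x => (ρ.rnDeriv volume x).toReal) =ᵐ[volume]
      fun x => (ν.rnDeriv volume x).toReal) : ρ = ν := by
  have := hρ.1
  have := hν.1
  rw [← Measure.withDensity_rnDeriv_eq ρ volume hρ.2.1,
    ← Measure.withDensity_rnDeriv_eq ν volume hν.2.1]
  refine withDensity_congr_ae ?_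
  filter_upwards [h, Measure.rnDeriv_lt_top ρ volume, Measure.rnDeriv_lt_top ν volume]
    with x h1 h2 h3
  exact (ENNReal.toReal_eq_toReal_iff' h2.ne h3.ne).1 h1

lemma rnDeriv_barenblattM {d : ℕ} {p lamc t : ℝ} (hp : 0 < p) (hlamc : 0 < lamc)
    (hβ : 0 < betaC d p) (ht : 0 < t) :
    (fun x => ((barenblattM d p lamc t).rnDeriv volume x).toReal) =ᵐ[volume]
      sigmap d p lamc t := by
  filter_upwards [Measure.rnDeriv_withDensity (volume : Measure (Euc d))
    (measurable_sigmap d p lamc t).ennreal_ofReal] with x hx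
  rw [barenblattM, hx, ENNReal.toReal_ofReal (sigmap_nonneg hp hlamc hβ ht x)]

lemma barenblattM_mem_DomEp {d : ℕ} {p lamc t : ℝ}
    (hdp : (2 ≤ d ∧ 1 - 1 / (d : ℝ) < p) ∨ (d = 1 ∧ 1/3 < p)) (hlamc : 0 < lamc)
    (hnorm : ∫ x : Euc d, hpProfile d p lamc x ∂volume = 1) (ht : 0 < t) :
    barenblattM d p lamc t ∈ DomEp d p := by
  have hp := p_pos_of hdp
  have hβ := betaC_pos hdp
  have hmem := barenblattM_mem_P2a hdp hlamc hnorm ht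
  refine ⟨hmem, ?_⟩
  obtain ⟨C, hC⟩ := sigmap_slope (lamc := lamc) hp hlamc (beta_denom_pos hdp) ht
  obtain ⟨h1, -, h2, -⟩ := density_facts hmem
  refine ((h1.const_mul ((C - 1) / p)).sub
    (h2.const_mul (betaC d p / (2 * t) / p))).congr ?_
  filter_upwards [rnDeriv_barenblattM hp hlamc hβ ht] with x hx
  simp only [Pi.sub_apply]
  rw [hx, Up_eq_of_slope hp (sigmap_nonneg hp hlamc hβ ht x) (hC x).1]
  ring

/-- Integrated supporting-line inequality: a Barenblatt density minimizes the entropy plus the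
confinement energy `∫ β|x|²/(2t)`, and it is the only minimizer. The constant `C` of the slope
disappears because both measures have mass one. -/
lemma barenblatt_minimizes {d : ℕ} {p lamc t : ℝ}
    (hdp : (2 ≤ d ∧ 1 - 1 / (d : ℝ) < p) ∨ (d = 1 ∧ 1/3 < p)) (hlamc : 0 < lamc)
    (hnorm : ∫ x : Euc d, hpProfile d p lamc x ∂volume = 1) (ht : 0 < t)
    {ρ : Measure (Euc d)} (hρ : ρ ∈ DomEp d p) :
    Ep p (barenblattM d p lamc t) + betaC d p / (2 * t) * sndMom (barenblattM d p lamc t)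
      ≤ Ep p ρ + betaC d p / (2 * t) * sndMom ρ ∧
    (Ep p ρ + betaC d p / (2 * t) * sndMom ρ
      ≤ Ep p (barenblattM d p lamc t) + betaC d p / (2 * t) * sndMom (barenblattM d p lamc t) →
      ρ = barenblattM d p lamc t) := by
  have hp := p_pos_of hdp
  have hβ := betaC_pos hdp
  have hν := barenblattM_mem_DomEp hdp hlamc hnorm ht
  have hrn := rnDeriv_barenblattM (d := d) hp hlamc hβ ht
  obtain ⟨C, hC⟩ := sigmap_slope (lamc := lamc) hp hlamc (beta_denom_pos hdp) ht
  set ν := barenblattM d p lamc t with hνdef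
  set k := betaC d p / (2 * t) with hk
  -- the integrand `U_p(f) + k|x|² f - C f` of the penalized energy
  let G : Measure (Euc d) → Euc d → ℝ := fun η x =>
    Up p ((η.rnDeriv volume x).toReal) + k * ((η.rnDeriv volume x).toReal * ‖x‖ ^ 2)
      - C * (η.rnDeriv volume x).toReal
  have hG : ∀ η ∈ DomEp d p, Integrable (G η) ∧ ∫ x, G η x = Ep p η + k * sndMom η - C := by
    intro η hη
    obtain ⟨i1, e1, i2, e2⟩ := density_facts hη.1
    refine ⟨(hη.2.add (i2.const_mul k)).sub (i1.const_mul C), ?_⟩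
    have i3 : Integrable (fun x => Up p ((η.rnDeriv volume x).toReal)
      + k * ((η.rnDeriv volume x).toReal * ‖x‖ ^ 2)) := hη.2.add (i2.const_mul k)
    simp only [G]
    rw [integral_sub i3 (i1.const_mul C), integral_add hη.2 (i2.const_mul k),
      integral_const_mul, integral_const_mul, e1, e2, mul_one]
    rfl
  have hle : G ν ≤ᵐ[volume] G ρ := by
    filter_upwards [hrn] with x hx
    have := Up_tangent_le hp (sigmap_nonneg hp hlamc hβ ht x)
      (f := (ρ.rnDeriv volume x).toReal) ENNReal.toReal_nonneg (hC x).1 (hC x).2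
    simp only [G]
    rw [hx]
    linarith
  obtain ⟨iν, eν⟩ := hG ν hν
  obtain ⟨iρ, eρ⟩ := hG ρ hρ
  have hmono := integral_mono_ae iν iρ hle
  rw [eν, eρ] at hmono
  refine ⟨by linarith, fun hrev => ?_⟩
  have heq : G ν =ᵐ[volume] G ρ :=
    (integral_eq_iff_of_ae_le iν iρ hle).1 (by rw [eν, eρ]; linarith)
  refine eq_of_density_ae_eq hρ.1 hν.1 ?_
  filter_upwards [heq, hrn] with x h1 hx
  by_contra hne
  rw [hx] at hne
  have := Up_tangent_lt hp (sigmap_nonneg hp hlamc hβ ht x)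
    (f := (ρ.rnDeriv volume x).toReal) ENNReal.toReal_nonneg hne (hC x).1 (hC x).2
  simp only [G] at h1
  rw [hx] at h1
  linarith

/-- **The proximal map preserves Barenblatt densities** (Proposition 4.8).
For `d ≥ 2` and `p > 1 - 1/d`, or `d = 1` and `p > 1/3`, with `β = 1/(2+d(p-1))`,
`μ = σ_p(r,·)dx` a Barenblatt density (`r > 0`), and `τ > 0`: the proximal point of
`μ` for `E_p` is `σ_p(θ_τ(r),·)dx`, where `s = θ_τ(r)` is the unique `s > τβ` with
`r^β = s^β - τβ s^{β-1}`. -/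
theorem barenblatt_preserved_by_proximal
    {d : ℕ} (p : ℝ)
    (hdp : (2 ≤ d ∧ 1 - 1 / (d : ℝ) < p) ∨ (d = 1 ∧ 1/3 < p))
    (lamc : ℝ) (hlamc : 0 < lamc)
    (hnorm : ∫ x : Euc d, hpProfile d p lamc x ∂volume = 1)
    (r τ : ℝ) (hr : 0 < r) (hτ : 0 < τ)
    (s : ℝ) (hs : τ * betaC d p < s)
    (hseq : r ^ betaC d p = s ^ betaC d p - τ * betaC d p * s ^ (betaC d p - 1)) :
    IsProximalPt (DomEp d p) (Ep p) τ (barenblattM d p lamc r) (barenblattM d p lamc s) ∧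
    ∀ ν, IsProximalPt (DomEp d p) (Ep p) τ (barenblattM d p lamc r) ν →
      ν = barenblattM d p lamc s := by
  have hβ := betaC_pos hdp
  have hs0 : 0 < s := lt_trans (mul_pos hτ hβ) hs
  set a : ℝ := 1 - τ * betaC d p / s with ha
  have ha0 : 0 < a := by
    have : τ * betaC d p / s < 1 := (div_lt_one hs0).2 hs
    linarith
  have hra : r ^ betaC d p = a * s ^ betaC d p := by
    rw [hseq, Real.rpow_sub hs0, Real.rpow_one, ha]; field_simp
  have hdil := barenblattM_dilate (d := d) p lamc hr hs0 hra
  have hμ := barenblattM_mem_P2a hdp hlamc hnorm hr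
  have hν := barenblattM_mem_DomEp hdp hlamc hnorm hs0
  have hup := W2_dilate hν.1 a
  have hmom := sndMom_dilate (barenblattM d p lamc s) a
  rw [← hdil] at hup hmom
  set μ := barenblattM d p lamc r with hμdef
  set ν := barenblattM d p lamc s with hνdef
  -- the quadratic potential of the duality bound is the confinement of `barenblatt_minimizes`
  have hk : betaC d p / (2 * s) = (1 - a) / (2 * τ) := by
    rw [ha]; field_simp; ring
  -- the duality bound is attained at `ν`, so distances to `μ` compare through second moments
  have hW : ∀ ρ ∈ DomEp d p,
      W2 μ ν ^ 2 / (2 * τ) + betaC d p / (2 * s) * sndMom ρ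
        ≤ W2 μ ρ ^ 2 / (2 * τ) + betaC d p / (2 * s) * sndMom ν := by
    intro ρ hρ
    have hlow := W2_lower hμ hρ.1 ha0
    rw [hmom] at hlow
    have h1 : (1 - 1 / a) * (a ^ 2 * sndMom ν) = (a ^ 2 - a) * sndMom ν := by
      field_simp
    rw [h1] at hlow
    have h2 : W2 μ ν ^ 2 + (1 - a) * sndMom ρ ≤ W2 μ ρ ^ 2 + (1 - a) * sndMom ν := by
      linarith
    have h3 := div_le_div_of_nonneg_right h2 (by positivity : (0 : ℝ) ≤ 2 * τ)
    rw [add_div, add_div] at h3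
    rw [hk, div_mul_eq_mul_div, div_mul_eq_mul_div]
    exact h3
  refine ⟨⟨hν, fun ρ hρ => ?_⟩, fun ρ hρ => ?_⟩
  · have := hW ρ hρ
    have := (barenblatt_minimizes hdp hlamc hnorm hs0 hρ).1
    linarith
  · refine (barenblatt_minimizes hdp hlamc hnorm hs0 hρ.1).2 ?_
    have := hW ρ hρ.1
    have := hρ.2 ν hν
    linarith
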